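/- arXiv:2108.10104 — 2 statements merged into one kernel-verified Lean document; each statement's English description precedes it below -/
import Mathlib

section
/- Let k be a natural number and let α, β : Fin k → ℂ. There exists a monic polynomial P ∈ ℂ[X] satisfying P(X+1)·∏_{i}(X + α i) = P(X)·∏_{i}(X + β i) if and only if there exists a permutation σ of Fin k such that for every i, the difference β (σ i) − α i is a nonnegative integer (i.e. lies in the image of ℕ in ℂ). -/
open Polynomial

/-!
Write `P = ∏ (X + γ)` over a multiset `M` of complex numbers. By unique factorization, the
equation says `(M + 1) ∪ A = M ∪ B` as multisets, where `A`, `B` are the multisets of the `α`'s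
and `β`'s. Removing one `γ` from `M` gives the same kind of equation with `γ + 1` adjoined to
`A` and `γ` adjoined to `B`; a matching of these larger multisets pairs `γ + 1` with some `b ∈ B`
and some `a ∈ A` with `γ`, so `a` can be paired with `b` directly
(`rel_of_map_add_one_add_eq`). Conversely, if `β (σ i) = α i + n i`, the product of all
`X + α i + j` with `j < n i` is a solution, by telescoping.
-/

/-- `P(X + 1) A = P(X) B` for products of linear factors, read off on multisets: the equation
forces a matching of `A` with `B` along nonnegative integer differences. -/
lemma rel_of_map_add_one_add_eq (M : Multiset ℂ) : ∀ A B : Multiset ℂ,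
    M.map (· + 1) + A = M + B →
      Multiset.Rel (fun a b : ℂ => ∃ n : ℕ, b - a = (n : ℂ)) A B := by
  induction M using Multiset.induction with
  | empty =>
    intro A B h
    obtain rfl : A = B := by simpa using h
    exact Multiset.rel_refl_of_refl_on fun a _ => ⟨0, by simp⟩
  | cons γ M ih =>
    intro A B h
    have h' : M.map (· + 1) + ((γ + 1) ::ₘ A) = M + (γ ::ₘ B) := by
      simpa using h
    obtain ⟨b, B', ⟨n, hn⟩, hrel, hB⟩ := Multiset.rel_cons_left.1 (ih _ _ h')
    rcases Multiset.cons_eq_cons.1 hB with ⟨rfl, -⟩ | ⟨-, D, rfl, rfl⟩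
    · -- `γ + 1` cannot be matched with `γ`, as the difference would be `-1`.
      exfalso
      have : ((n + 1 : ℕ) : ℂ) = 0 := by
        push_cast
        linear_combination -hn
      exact absurd (Nat.cast_eq_zero.1 this) n.succ_ne_zero
    · obtain ⟨a, A', ⟨m, hm⟩, hrel', rfl⟩ := Multiset.rel_cons_right.1 hrel
      refine Multiset.Rel.cons ⟨n + m + 1, ?_⟩ hrel'
      push_cast
      linear_combination hn + hm

/-- A multiset related to a finite set `s` can be indexed by `s` compatibly with the relation.
The nonemptiness hypothesis supplies values outside `s`; it holds for `ι = S`, even when empty. -/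
lemma exists_eq_map_of_rel {ι S : Type*} [hne : Nonempty (ι → S)] (r : ι → S → Prop)
    (s : Finset ι) : ∀ B : Multiset S, Multiset.Rel r s.val B →
      ∃ f : ι → S, B = s.val.map f ∧ ∀ i ∈ s, r i (f i) := by
  classical
  induction s using Finset.induction with
  | empty =>
    intro B h
    refine ⟨hne.some, ?_, by simp⟩
    simpa using h
  | insert i s hi ih =>
    intro B h
    rw [Finset.insert_val_of_notMem hi] at h
    obtain ⟨b, B', hb, hrel, rfl⟩ := Multiset.rel_cons_left.1 h
    obtain ⟨f, rfl, hf⟩ := ih _ hrel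
    have hji : ∀ j ∈ s, j ≠ i := fun j hj h => hi (h ▸ hj)
    refine ⟨Function.update f i b, ?_, ?_⟩
    · rw [Finset.insert_val_of_notMem hi, Multiset.map_cons, Function.update_self]
      congr 1
      exact Multiset.map_congr rfl fun j hj => by
        rw [Function.update_of_ne (hji j hj)]
    · intro j hj
      rcases Finset.mem_insert.1 hj with rfl | hj
      · simpa using hb
      · rw [Function.update_of_ne (hji j hj)]
        exact hf j hj

lemma prod_X_add_C_injective :
    Function.Injective fun M : Multiset ℂ => (M.map fun a => X + C a).prod := by
  have key (M : Multiset ℂ) : (M.map fun a => X + C a).prod.roots = M.map (- ·) := by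
    rw [← roots_multiset_prod_X_sub_C (M.map (- ·)), Multiset.map_map]
    simp
  intro M N h
  have h' := congrArg roots h
  simp only [key] at h'
  exact Multiset.map_injective neg_injective h'

lemma exists_eq_prod_X_add_C {P : ℂ[X]} (hP : P.Monic) :
    ∃ M : Multiset ℂ, P = (M.map fun a => X + C a).prod := by
  refine ⟨P.roots.map (- ·), ?_⟩
  rw [Multiset.map_map]
  simpa [sub_eq_add_neg] using (IsAlgClosed.splits P).eq_prod_roots_of_monic hP

/-- The telescoping identity: `P = ∏_{j < n} (X + a + j)` satisfies
`P(X + 1) (X + a) = P(X) (X + a + n)`. -/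
lemma comp_prod_range_mul (a : ℂ) (n : ℕ) :
    (∏ j ∈ Finset.range n, (X + C (a + j))).comp (X + 1) * (X + C a) =
      (∏ j ∈ Finset.range n, (X + C (a + j))) * (X + C (a + n)) := by
  have h : (∏ j ∈ Finset.range n, (X + C (a + j))).comp (X + 1) =
      ∏ j ∈ Finset.range n, (X + C (a + (j + 1 : ℕ))) := by
    rw [prod_comp]
    refine Finset.prod_congr rfl fun j _ => ?_
    simp
    ring
  rw [h, ← Finset.prod_range_succ (fun j : ℕ => (X + C (a + j) : ℂ[X])),
    Finset.prod_range_succ' (fun j : ℕ => (X + C (a + j) : ℂ[X]))]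
  simp

/-- There exists a monic polynomial `P ∈ ℂ[X]` with
`P(X+1) · ∏ i (X + α i) = P(X) · ∏ i (X + β i)` if and only if the `β`'s can be
renumbered by a permutation `σ` so that every difference `β (σ i) − α i` is a
nonnegative integer. -/
theorem stmt_9 (k : ℕ) (α β : Fin k → ℂ) :
    (∃ P : ℂ[X], P.Monic ∧
        P.comp (X + 1) * ∏ i, (X + C (α i)) = P * ∏ i, (X + C (β i))) ↔
      ∃ σ : Equiv.Perm (Fin k), ∀ i, ∃ n : ℕ, β (σ i) - α i = (n : ℂ) := by
  constructor
  · rintro ⟨P, hP, h⟩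
    obtain ⟨M, rfl⟩ := exists_eq_prod_X_add_C hP
    have hprod (f : Fin k → ℂ) : ∏ i, (X + C (f i)) =
        ((Finset.univ.val.map f).map fun a => X + C a).prod := by
      rw [Multiset.map_map]
      rfl
    have hcomp : (M.map fun a => X + C a).prod.comp (X + 1) =
        ((M.map (· + 1)).map fun a => X + C a).prod := by
      rw [multiset_prod_comp, Multiset.map_map, Multiset.map_map]
      congr 1
      refine Multiset.map_congr rfl fun a _ => ?_
      simp
      ring
    rw [hprod, hprod, hcomp, ← Multiset.prod_add, ← Multiset.prod_add, ← Multiset.map_add,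
      ← Multiset.map_add] at h
    have hrel := rel_of_map_add_one_add_eq M _ _ (prod_X_add_C_injective h)
    -- Matching indices rather than values makes the matching a permutation of `Fin k`.
    rw [Multiset.rel_map] at hrel
    have : Nonempty (Fin k → Fin k) := ⟨id⟩
    obtain ⟨f, hf, hfr⟩ := exists_eq_map_of_rel _ Finset.univ _ hrel
    exact ⟨Equiv.ofBijective f ((Multiset.bijective_iff_map_univ_eq_univ f).2 hf.symm),
      fun i => hfr i (Finset.mem_univ i)⟩
  · rintro ⟨σ, hσ⟩
    choose n hn using hσ
    refine ⟨∏ i, ∏ j ∈ Finset.range (n i), (X + C (α i + j)),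
      monic_prod_of_monic _ _ fun i _ => monic_prod_of_monic _ _ fun j _ => monic_X_add_C _, ?_⟩
    rw [← Equiv.prod_comp σ (fun i => X + C (β i)), prod_comp, ← Finset.prod_mul_distrib,
      ← Finset.prod_mul_distrib]
    refine Finset.prod_congr rfl fun i _ => ?_
    rw [comp_prod_range_mul, ← hn i, add_sub_cancel]
end

section
/- Let k ≥ 1 and let α, β : Fin k → ℂ be arbitrary. Say that a list of pairs (α'_1,β'_1),…,(α'_k,β'_k) of complex numbers satisfies condition (C) if for each h ∈ {1,…,k−1} the following hold, where for a multiset S of complex numbers S₊ denotes the sub-multiset of its elements that are nonnegative integers: (1) if the multiset A_h = {β'_h − α'_i, β'_i − α'_h : h ≤ i ≤ k} has A_h₊ nonempty, then β'_h − α'_h is a minimal element of (A_h ∪ B_h)₊, where B_h = {β'_h − α'_i + 1/2, β'_i − α'_h + 1/2 : h ≤ i ≤ k}; (2) if A_h₊ is empty and B_h₊ is nonempty, then β'_h − α'_h + 1/2 is a minimal element of B_h₊. Then there exist permutations σ, τ of Fin k and nonnegative integers l_1,…,l_k, m_1,…,m_k such that the list of pairs (α(σ i) − l_i, β(τ i)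 + m_i), i = 1,…,k, satisfies condition (C). -/
/-!
The renumbering is greedy. Give a pair `(α, β)` cost `0` if `β - α` is an integer, cost `1` if
`β - α + 1/2` is an integer, and cost `2` otherwise; integer shifts do not change the cost.
Choosing at each step a pair of least cost among the unused `α`'s and `β`'s
(`exists_greedy_perms`) makes the `h`-th pair satisfy the integrality required by (C): if an
element of `A_h` (respectively `B_h`) is an integer, then the `h`-th pair has cost `0`
(respectively at most `1`).

For minimality, the shifts are chosen so that the real parts of the `α'_i` are nonpositive and
decreasing in `i`, those of the `β'_i` nonnegative and increasing (`exists_shift`). Then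
`β'_h - α'_h` has the least real part among all `β'_h - α'_i` and `β'_i - α'_h` with `h ≤ i`, and
this real part is nonnegative.
-/

/-- `z ∈ ℂ` is a nonnegative integer: it lies in the image of `ℕ` in `ℂ`. -/
def IsNonnegInt (z : ℂ) : Prop := ∃ n : ℕ, z = (n : ℂ)

/-- Condition (C) on a list of pairs `(α'_1,β'_1),…,(α'_k,β'_k)` of complex numbers
(indexed here by `Fin k`, so `h ∈ {1,…,k−1}` becomes `(h : ℕ) < k − 1` and
`i ∈ {h,…,k}` becomes `h ≤ i`):
(1) if the multiset `A_h = {β'_h − α'_i, β'_i − α'_h : h ≤ i}` contains a nonnegative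
integer, then `β'_h − α'_h` is a nonnegative integer which is minimal among the
nonnegative-integer elements of `A_h ∪ B_h`, where
`B_h = {β'_h − α'_i + 1/2, β'_i − α'_h + 1/2 : h ≤ i}`;
(2) if `A_h` contains no nonnegative integer but `B_h` does, then `β'_h − α'_h + 1/2`
is a nonnegative integer which is minimal among the nonnegative-integer elements of `B_h`. -/
def CondC {k : ℕ} (α' β' : Fin k → ℂ) : Prop :=
  ∀ h : Fin k, (h : ℕ) < k - 1 →
    ((∃ i : Fin k, h ≤ i ∧ (IsNonnegInt (β' h - α' i) ∨ IsNonnegInt (β' i - α' h))) →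
      ∃ n : ℕ, β' h - α' h = (n : ℂ) ∧
        ∀ i : Fin k, h ≤ i → ∀ m : ℕ,
          (β' h - α' i = (m : ℂ) ∨ β' i - α' h = (m : ℂ) ∨
            β' h - α' i + 1/2 = (m : ℂ) ∨ β' i - α' h + 1/2 = (m : ℂ)) → n ≤ m) ∧
    ((¬ (∃ i : Fin k, h ≤ i ∧ (IsNonnegInt (β' h - α' i) ∨ IsNonnegInt (β' i - α' h))) ∧
        (∃ i : Fin k, h ≤ i ∧
          (IsNonnegInt (β' h - α' i + 1/2) ∨ IsNonnegInt (β' i - α' h + 1/2)))) →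
      ∃ n : ℕ, β' h - α' h + 1/2 = (n : ℂ) ∧
        ∀ i : Fin k, h ≤ i → ∀ m : ℕ,
          (β' h - α' i + 1/2 = (m : ℂ) ∨ β' i - α' h + 1/2 = (m : ℂ)) → n ≤ m)

/-- Greedy selection: rows and columns of a cost table can be renumbered so that each diagonal
entry is minimal in the lower-right block that it starts. -/
lemma exists_greedy_perms (k : ℕ) (f : Fin k → Fin k → ℕ) :
    ∃ σ τ : Equiv.Perm (Fin k), ∀ h i j : Fin k, h ≤ i → h ≤ j →
      f (σ h) (τ h) ≤ f (σ i) (τ j) := by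
  induction k with
  | zero => exact ⟨1, 1, fun h => h.elim0⟩
  | succ n ih =>
    obtain ⟨⟨a, b⟩, hab⟩ :=
      Finite.exists_min (fun p : Fin (n + 1) × Fin (n + 1) => f p.1 p.2)
    obtain ⟨σ, τ, hst⟩ :=
      ih (fun x y => f (Equiv.swap 0 a x.succ) (Equiv.swap 0 b y.succ))
    refine ⟨Equiv.Perm.decomposeFin.symm (a, σ), Equiv.Perm.decomposeFin.symm (b, τ), ?_⟩
    intro h i j hi hj
    induction h using Fin.cases with
    | zero =>
      simp only [Equiv.Perm.decomposeFin_symm_apply_zero]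
      exact hab (_, _)
    | succ h =>
      induction i using Fin.cases with
      | zero => exact absurd hi (by simp)
      | succ i =>
        induction j using Fin.cases with
        | zero => exact absurd hj (by simp)
        | succ j =>
          simp only [Equiv.Perm.decomposeFin_symm_apply_succ]
          exact hst h i j (by simpa using hi) (by simpa using hj)

open Classical in
/-- The cost of pairing `x` (an `α`) with `y` (a `β`): `0` if `y - x` is an integer, `1` if
`y - x + 1/2` is an integer, `2` otherwise. -/
noncomputable def pairCost (x y : ℂ) : ℕ :=
  if ∃ z : ℤ, y - x = z then 0 else if ∃ z : ℤ, y - x + 1/2 = z then 1 else 2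

lemma pairCost_eq_zero {x y : ℂ} : pairCost x y = 0 ↔ ∃ z : ℤ, y - x = z := by
  unfold pairCost
  split_ifs with h1 h2 <;> simp [h1]

lemma pairCost_le_one {x y : ℂ} :
    pairCost x y ≤ 1 ↔ (∃ z : ℤ, y - x = z) ∨ ∃ z : ℤ, y - x + 1/2 = z := by
  unfold pairCost
  split_ifs with h1 h2
  · simp [h1]
  · simp only [le_refl, true_iff]; exact Or.inr h2
  · simp only [Nat.not_ofNat_le_one, false_iff]; tauto

lemma pairCost_shift (x y : ℂ) (l m : ℕ) : pairCost (x - l) (y + m) = pairCost x y := by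
  have key : ∀ c : ℂ, (∃ z : ℤ, (y + m) - (x - l) + c = z) ↔ ∃ z : ℤ, y - x + c = z := by
    intro c
    constructor
    · rintro ⟨z, hz⟩
      exact ⟨z - m - l, by push_cast; linear_combination hz⟩
    · rintro ⟨z, hz⟩
      exact ⟨z + m + l, by push_cast; linear_combination hz⟩
  have key0 := key 0
  simp only [add_zero] at key0
  unfold pairCost
  congr 1
  · exact propext key0
  · congr 1
    exact propext (key (1/2))

/-- Condition (C) follows from greedy costs together with monotone real parts. -/
lemma condC_of_monotone {k : ℕ} (a b : Fin k → ℂ)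
    (hcost : ∀ h i j : Fin k, h ≤ i → h ≤ j → pairCost (a h) (b h) ≤ pairCost (a i) (b j))
    (ha : ∀ h i : Fin k, h ≤ i → (a i).re ≤ (a h).re)
    (hb : ∀ h i : Fin k, h ≤ i → (b h).re ≤ (b i).re)
    (hpos : ∀ h : Fin k, (a h).re ≤ (b h).re) : CondC a b := by
  intro h _
  constructor
  · rintro ⟨i, hi, hA⟩
    have h0 : pairCost (a h) (b h) = 0 := by
      rcases hA with ⟨n, hn⟩ | ⟨n, hn⟩
      · have := hcost h i h hi le_rfl
        have h0 : pairCost (a i) (b h) = 0 := pairCost_eq_zero.2 ⟨n, by simpa using hn⟩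
        omega
      · have := hcost h h i le_rfl hi
        have h0 : pairCost (a h) (b i) = 0 := pairCost_eq_zero.2 ⟨n, by simpa using hn⟩
        omega
    obtain ⟨z, hz⟩ := pairCost_eq_zero.1 h0
    have hre : (b h).re - (a h).re = z := by simpa using congrArg Complex.re hz
    have hz0 : 0 ≤ z := by
      have : (0 : ℝ) ≤ z := by linarith [hpos h]
      exact_mod_cast this
    lift z to ℕ using hz0
    refine ⟨z, by simpa using hz, ?_⟩
    intro j hj m hm
    have h1 := ha h j hj
    have h2 := hb h j hj
    have hle : (z : ℝ) ≤ m := by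
      push_cast at hre
      rcases hm with hm | hm | hm | hm <;>
        · have := congrArg Complex.re hm
          simp at this
          linarith
    exact_mod_cast hle
  · rintro ⟨hnA, i, hi, hB⟩
    have h1 : pairCost (a h) (b h) ≤ 1 := by
      rcases hB with ⟨n, hn⟩ | ⟨n, hn⟩
      · exact (hcost h i h hi le_rfl).trans (pairCost_le_one.2 (Or.inr ⟨n, by simpa using hn⟩))
      · exact (hcost h h i le_rfl hi).trans (pairCost_le_one.2 (Or.inr ⟨n, by simpa using hn⟩))
    rcases pairCost_le_one.1 h1 with ⟨z, hz⟩ | ⟨z, hz⟩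
    · -- an integral `b h - a h` is nonnegative, hence lies in `A_h₊`, which is empty
      exfalso
      have hre : (b h).re - (a h).re = z := by simpa using congrArg Complex.re hz
      have hz0 : 0 ≤ z := by
        have : (0 : ℝ) ≤ z := by linarith [hpos h]
        exact_mod_cast this
      lift z to ℕ using hz0
      exact hnA ⟨h, le_rfl, Or.inl ⟨z, by simpa using hz⟩⟩
    · have hre : (b h).re - (a h).re + 1/2 = z := by simpa using congrArg Complex.re hz
      have hz0 : 0 ≤ z := by
        have : (0 : ℝ) ≤ z := by linarith [hpos h]
        exact_mod_cast this
      lift z to ℕ using hz0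
      refine ⟨z, by simpa using hz, ?_⟩
      intro j hj m hm
      have h1 := ha h j hj
      have h2 := hb h j hj
      have hle : (z : ℝ) ≤ m := by
        push_cast at hre
        rcases hm with hm | hm <;>
          · have := congrArg Complex.re hm
            simp at this
            linarith
      exact_mod_cast hle

/-- Finitely many reals can be raised by natural numbers so as to become nonnegative and
monotone: for `M` large, the `i`-th one is moved into `[M + i, M + i + 1)`. -/
lemma exists_shift {k : ℕ} (x : Fin k → ℝ) :
    ∃ m : Fin k → ℕ, (∀ i, 0 ≤ x i + m i) ∧ ∀ h i, h ≤ i → x h + m h ≤ x i + m i := by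
  obtain ⟨M, hM⟩ : ∃ M : ℕ, ∀ i, x i ≤ M := by
    obtain ⟨B, hB⟩ := (Set.finite_range x).bddAbove
    obtain ⟨M, hM⟩ := exists_nat_ge B
    exact ⟨M, fun i => (hB ⟨i, rfl⟩).trans hM⟩
  have hnn : ∀ i : Fin k, 0 ≤ (M : ℝ) + (i : ℕ) - x i := fun i => by
    have := hM i
    have : (0 : ℝ) ≤ (i : ℕ) := Nat.cast_nonneg _
    linarith
  have hlo : ∀ i : Fin k, (M : ℝ) + (i : ℕ) - x i ≤ ⌈(M : ℝ) + (i : ℕ) - x i⌉₊ :=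
    fun i => Nat.le_ceil _
  refine ⟨fun i => ⌈(M : ℝ) + (i : ℕ) - x i⌉₊, fun i => ?_, fun h i hi => ?_⟩
  · have := hlo i
    have : (0 : ℝ) ≤ (M : ℝ) := Nat.cast_nonneg _
    have : (0 : ℝ) ≤ (i : ℕ) := Nat.cast_nonneg _
    linarith
  · rcases hi.eq_or_lt with rfl | hlt
    · exact le_rfl
    · have h1 := hlo i
      have h2 := Nat.ceil_lt_add_one (hnn h)
      have h3 : ((h : ℕ) : ℝ) + 1 ≤ (i : ℕ) := by exact_mod_cast hlt
      linarith

/-- For any parameters `α, β : Fin k → ℂ` (`k ≥ 1`) there are renumberings `σ, τ` and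
nonnegative integer shifts `l_i, m_i` so that the shifted list of pairs
`(α(σ i) − l_i, β(τ i) + m_i)` satisfies condition (C). -/
theorem stmt_11 (k : ℕ) (hk : 1 ≤ k) (α β : Fin k → ℂ) :
    ∃ (σ τ : Equiv.Perm (Fin k)) (l m : Fin k → ℕ),
      CondC (fun i => α (σ i) - (l i : ℂ)) (fun i => β (τ i) + (m i : ℂ)) := by
  obtain ⟨σ, τ, hst⟩ := exists_greedy_perms k (fun i j => pairCost (α i) (β j))
  obtain ⟨l, hl0, hl⟩ := exists_shift (fun i => -(α (σ i)).re)
  obtain ⟨m, hm0, hm⟩ := exists_shift (fun i => (β (τ i)).re)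
  refine ⟨σ, τ, l, m, condC_of_monotone _ _ ?_ ?_ ?_ ?_⟩
  · intro h i j hi hj
    simpa only [pairCost_shift] using hst h i j hi hj
  · intro h i hi
    have := hl h i hi
    simp
    linarith
  · intro h i hi
    simpa using hm h i hi
  · intro h
    have h1 := hl0 h
    have h2 := hm0 h
    simp
    linarith
end
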